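/- Let B ⊂ A be a regular irreducible inclusion of simple unital C*-algebras with common unit admitting a finite-index conditional expectation, where irreducible means C_A(B) = ℂ·1. Then there exist a finite group G (isomorphic to the Weyl group N_A(B)/U(B)) and a map u : G → N_A(B) with u_e = 1 such that: (i) σ(g,h) := u_g u_h u_{gh}* is a unitary of B for all g, h ∈ G; (ii) for every g ≠ e the automorphism Ad(u_g)|_B of B is outer; and (iii) every x ∈ A can be written uniquely as x = Σ_{g ∈ G} u_g b_g with b_g ∈ B. (Thus (α, σ) with α_g = Ad(u_g)|_B is an outer cocycle action of the Weyl group G on B and (B ⊂ A) ≅ (B ⊂ B ⋊^r_{(α,σ)} G).) -/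

import Mathlib

/-!
Call unitaries `u_i` of `A` orthonormal if `E(u_i* u_j) = δ_ij`. Coefficients with respect to an
orthonormal family are determined by `E(u_i* ∑_j u_j b_j) = b_i`, so everything comes down to
orthonormality, finiteness of the family and totality.

Irreducibility gives orthonormality: if `x b = w b w* x` for all `b ∈ B`, then `w* x` commutes with
`B`, so `x` is a scalar multiple of `w`. Applied to `x = E(w)` with `w ∈ N_A(B)`, this shows that
`E(w) = 0` unless `w ∈ B`; hence representatives of distinct classes of the Weyl group are
orthonormal. The same observation, applied to two unitaries inducing the same automorphism of `B`,
gives outerness.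

Finiteness is a Riemann–Lebesgue argument. For `x ∈ N_A(B)` at most one coefficient `E(u_g* x)` is
nonzero, and by regularity `N_A(B)` spans a dense subspace, so the coefficients of every `x ∈ A`
tend to zero along the Weyl group. By the quasi-basis expansion `u_g* = ∑_k E(u_g* λ_k) λ_k*`, the
unitaries `u_g*` themselves tend to zero, which is impossible for an infinite group.

Totality: `x ↦ ∑_g u_g E(u_g* x)` is continuous and fixes `N_A(B)`, hence is the identity.
-/

namespace RegularInclusion

variable {A : Type*} [NormedRing A] [StarRing A] [CStarRing A] [CompleteSpace A]
  [NormedAlgebra ℂ A] [StarModule ℂ A]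

/-- A conditional expectation of `A` onto the subset `B`: a `ℂ`-linear positive
`B`-bimodular projection of `A` onto `B`. -/
def IsCondExp (B : Set A) (E : A →ₗ[ℂ] A) : Prop :=
  (∀ x, E x ∈ B) ∧ (∀ b ∈ B, E b = b) ∧
  (∀ x, ∃ y, E (star x * x) = star y * y) ∧
  (∀ b₁ ∈ B, ∀ b₂ ∈ B, ∀ x, E (b₁ * x * b₂) = b₁ * E x * b₂)

/-- `l` is a right quasi-basis for `E`, witnessing finite index. -/
def IsRightQB (E : A →ₗ[ℂ] A) {n : ℕ} (l : Fin n → A) : Prop :=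
  ∀ x, x = ∑ i, E (x * l i) * star (l i)

/-- The centralizer (relative commutant) `C_A(B)` of `B` in `A`. -/
def cent (B : Set A) : Set A := {x | ∀ b ∈ B, x * b = b * x}

/-- The normalizer `N_A(B) = {u ∈ U(A) : uBu* = B}` of `B` in `A`. -/
def normalizer (B : Set A) : Set A :=
  {u | u ∈ unitary A ∧ (fun x => u * x * star u) '' B = B}

/-- The set `U(B)` of unitaries of `B`. -/
def UB (B : Set A) : Set A := {b | b ∈ B ∧ b ∈ unitary A}

/-- The set `U(B)·U(C_A(B))` of products of a unitary of `B` and a unitary of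
the centralizer of `B`. -/
def UBC (B : Set A) : Set A :=
  {x | ∃ b c, b ∈ B ∧ b ∈ unitary A ∧ c ∈ cent B ∧ c ∈ unitary A ∧ x = b * c}

/-- Simplicity of the C*-algebra (given as the subset `S` of `A`): the only closed
two-sided ideals of `S` are `{0}` and `S`. -/
def IsSimpleCStar (S : Set A) : Prop :=
  ∀ I : Set A, I ⊆ S → IsClosed I → (0 : A) ∈ I →
    (∀ x ∈ I, ∀ y ∈ I, x + y ∈ I) →
    (∀ x ∈ I, ∀ b ∈ S, x * b ∈ I ∧ b * x ∈ I) →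
    I = {0} ∨ I = S

/-- The intermediate C*-subalgebra `C := C*(B ∪ C_A(B))` generated by `B` and the
centralizer of `B`. -/
def genC (B : Set A) : StarSubalgebra ℂ A :=
  (StarAlgebra.adjoin ℂ (B ∪ cent B)).topologicalClosure

/-- Regularity of the inclusion `B ⊆ A`: the normalizer of `B` generates `A` as a
C*-algebra. -/
def IsRegular (B : Set A) : Prop :=
  (StarAlgebra.adjoin ℂ (normalizer B)).topologicalClosure = ⊤

/-- `E₀` is the minimal conditional expectation of `A` onto `B`: the finite-index
conditional expectation whose (scalar) Watatani index is least among all finite-index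
conditional expectations onto `B`. -/
def IsMinimalCondExp (B : Set A) (E₀ : A →ₗ[ℂ] A) : Prop :=
  IsCondExp B E₀ ∧
  ∃ (r₀ : ℝ) (n : ℕ) (l : Fin n → A), IsRightQB E₀ l ∧
    (∑ i, l i * star (l i)) = (r₀ : ℂ) • 1 ∧
    ∀ E : A →ₗ[ℂ] A, IsCondExp B E → ∀ (m : ℕ) (μ : Fin m → A), IsRightQB E μ →
      ∀ r : ℝ, (∑ i, μ i * star (μ i)) = (r : ℂ) • 1 → r₀ ≤ r

/-- A bundled finite group. -/
structure FiniteGroupData : Type 1 where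
  G : Type
  [grp : Group G]
  [fin : Fintype G]

attribute [instance] FiniteGroupData.grp FiniteGroupData.fin

section Irreducible

variable {R : Type*} [NormedRing R] [StarRing R]

lemma star_mul_mem_cent {S : Set R} {w x : R} (hw : w ∈ unitary R)
    (h : ∀ b ∈ S, x * b = w * b * star w * x) : star w * x ∈ cent S := fun b hb => by
  rw [mul_assoc, h b hb]
  simp only [← mul_assoc, Unitary.star_mul_self_of_mem hw, one_mul]

variable [NormedAlgebra ℂ R]

/-- Irreducibility of `S` in `R`: the centralizer of `S` consists of the scalars. -/
def IsIrreducible (S : Set R) : Prop := ∀ z ∈ cent S, ∃ c : ℂ, z = c • (1 : R)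

lemma IsIrreducible.exists_eq_smul {S : Set R} (hS : IsIrreducible S) {w x : R}
    (hw : w ∈ unitary R) (h : ∀ b ∈ S, x * b = w * b * star w * x) : ∃ c : ℂ, x = c • w := by
  obtain ⟨c, hc⟩ := hS _ (star_mul_mem_cent hw h)
  refine ⟨c, ?_⟩
  calc x = w * (star w * x) := by rw [← mul_assoc, Unitary.mul_star_self_of_mem hw, one_mul]
    _ = c • w := by rw [hc, mul_smul_comm, mul_one]

lemma IsIrreducible.mem_of_conj_eq [StarModule ℂ R] {B : StarSubalgebra ℂ R}
    (hB : IsIrreducible (B : Set R)) {v w : R} (hv : v ∈ UB (B : Set R)) (hw : w ∈ unitary R)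
    (h : ∀ b ∈ B, w * b * star w = v * b * star v) : w ∈ B := by
  obtain ⟨c, rfl⟩ := hB.exists_eq_smul (x := w) hv.2 fun b hb => by
    rw [← h b hb, mul_assoc _ (star w), Unitary.star_mul_self_of_mem hw, mul_one]
  exact B.smul_mem hv.1 c

end Irreducible

section Weyl

variable {R : Type*} [NormedRing R] [StarRing R]

open scoped Pointwise in
/-- The normalizer `N_R(S)` as a subgroup of the unitary group of `R`: the stabilizer of `S` under
conjugation. -/
def normalizerSubgroup (S : Set R) : Subgroup (unitary R) :=
  (MulAction.stabilizer (ConjAct Rˣ) S).comap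
    (ConjAct.toConjAct.toMonoidHom.comp Unitary.toUnits)

lemma mem_normalizer_iff_exists_coe_eq {S : Set R} {w : R} :
    w ∈ normalizer S ↔ ∃ v : normalizerSubgroup S, (v : R) = w :=
  ⟨fun hw => ⟨⟨⟨w, hw.1⟩, hw.2⟩, rfl⟩, by rintro ⟨v, rfl⟩; exact ⟨v.1.2, v.2⟩⟩

lemma coe_mem_normalizer {S : Set R} (w : normalizerSubgroup S) : (w : R) ∈ normalizer S :=
  mem_normalizer_iff_exists_coe_eq.mpr ⟨w, rfl⟩

lemma conj_mem_of_mem_normalizer {S : Set R} {w b : R} (hw : w ∈ normalizer S) (hb : b ∈ S) :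
    w * b * star w ∈ S :=
  hw.2.subset (Set.mem_image_of_mem _ hb)

lemma star_mem_normalizer {S : Set R} {w : R} (hw : w ∈ normalizer S) : star w ∈ normalizer S := by
  obtain ⟨v, rfl⟩ := mem_normalizer_iff_exists_coe_eq.mp hw
  exact coe_mem_normalizer v⁻¹

lemma closure_normalizer (S : Set R) :
    (Submonoid.closure (normalizer S) : Set R) = normalizer S := by
  let N : Submonoid R := (normalizerSubgroup S).toSubmonoid.map (unitary R).subtype
  have hN : normalizer S = N := by
    ext w
    simp [N, mem_normalizer_iff_exists_coe_eq]
  rw [hN, Submonoid.closure_eq]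

variable [NormedAlgebra ℂ R] [StarModule ℂ R]

/-- The unitary group `U(B)` as a subgroup of the normalizer of `B`. -/
def unitarySubgroup (B : StarSubalgebra ℂ R) : Subgroup (normalizerSubgroup (B : Set R)) where
  carrier := {w | (w : R) ∈ UB (B : Set R)}
  one_mem' := ⟨one_mem B, one_mem _⟩
  mul_mem' := fun hv hw => ⟨mul_mem (s := B) hv.1 hw.1, mul_mem hv.2 hw.2⟩
  inv_mem' := fun hw => ⟨star_mem (s := B) hw.1, Unitary.star_mem hw.2⟩

instance unitarySubgroup_normal (B : StarSubalgebra ℂ R) : (unitarySubgroup B).Normal where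
  conj_mem := fun v hv w =>
    ⟨conj_mem_of_mem_normalizer (coe_mem_normalizer w) hv.1, (w * v * w⁻¹).1.2⟩

/-- The Weyl group `N_R(B)/U(B)`. -/
abbrev Weyl (B : StarSubalgebra ℂ R) : Type _ :=
  normalizerSubgroup (B : Set R) ⧸ unitarySubgroup B

variable {B : StarSubalgebra ℂ R} {v w : normalizerSubgroup (B : Set R)}

lemma Weyl.mk_eq_one_iff : (w : Weyl B) = 1 ↔ (w : R) ∈ UB (B : Set R) :=
  QuotientGroup.eq_one_iff w

lemma Weyl.mk_eq_mk_iff_mul_star_mem :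
    (v : Weyl B) = w ↔ (v : R) * star (w : R) ∈ UB (B : Set R) := by
  rw [← mul_inv_eq_one]
  exact Weyl.mk_eq_one_iff (w := v * w⁻¹)

lemma Weyl.mk_eq_mk_iff_star_mul_mem :
    (v : Weyl B) = w ↔ star (v : R) * (w : R) ∈ UB (B : Set R) :=
  QuotientGroup.eq

lemma IsIrreducible.mk_eq_one_of_conj_eq (hB : IsIrreducible (B : Set R)) {b : R}
    (hb : b ∈ UB (B : Set R))
    (h : ∀ x ∈ B, (w : R) * x * star (w : R) = b * x * star b) : (w : Weyl B) = 1 :=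
  Weyl.mk_eq_one_iff.mpr ⟨hB.mem_of_conj_eq hb w.1.2 h, w.1.2⟩

variable {ι : Type*} {u : ι → normalizerSubgroup (B : Set R)}

lemma exists_mul_star_mem_UB (hu : Function.Surjective fun i => (u i : Weyl B)) {x : R}
    (hx : x ∈ normalizer (B : Set R)) : ∃ i, x * star (u i : R) ∈ UB (B : Set R) := by
  obtain ⟨v, rfl⟩ := mem_normalizer_iff_exists_coe_eq.mp hx
  obtain ⟨i, hi⟩ := hu v
  exact ⟨i, Weyl.mk_eq_mk_iff_mul_star_mem.mp hi.symm⟩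

lemma exists_eq_mul_of_mem_normalizer (hu : Function.Surjective fun i => (u i : Weyl B)) {x : R}
    (hx : x ∈ normalizer (B : Set R)) : ∃ i, ∃ b ∈ B, x = u i * b := by
  obtain ⟨v, rfl⟩ := mem_normalizer_iff_exists_coe_eq.mp hx
  obtain ⟨i, hi⟩ := hu v
  refine ⟨i, star (u i : R) * v, (Weyl.mk_eq_mk_iff_star_mul_mem.mp hi).1, ?_⟩
  rw [← mul_assoc, Unitary.mul_star_self_of_mem (u i).1.2, one_mul]

end Weyl

lemma exists_normalized_lift {G N : Type*} [Group G] [Group N] {K : Subgroup N} [K.Normal]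
    (φ : G →* N ⧸ K) : ∃ u : G → N, u 1 = 1 ∧ ∀ g, (u g : N ⧸ K) = φ g := by
  classical
  refine ⟨Function.update (fun g => (φ g).out) 1 1, Function.update_self .., fun g => ?_⟩
  rcases eq_or_ne g 1 with rfl | hg
  · rw [Function.update_self, QuotientGroup.mk_one, map_one]
  · rw [Function.update_of_ne hg, QuotientGroup.out_eq']

lemma exists_finiteGroupData (W : Type*) [Group W] [Finite W] :
    ∃ D : FiniteGroupData, Nonempty (D.G ≃* W) := by
  obtain ⟨n, ⟨e⟩⟩ := Finite.exists_equiv_fin W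
  let _ : Group (Fin n) := e.symm.group
  exact ⟨⟨Fin n⟩, ⟨e.symm.mulEquiv⟩⟩

section CondExp

variable {R : Type*} [NormedRing R] [StarRing R] [NormedAlgebra ℂ R] [StarModule ℂ R]
  {B : StarSubalgebra ℂ R} {E : R →ₗ[ℂ] R}

lemma IsCondExp.map_mul_right (hE : IsCondExp (B : Set R) E) {b : R} (hb : b ∈ B) (x : R) :
    E (x * b) = E x * b := by
  simpa only [one_mul] using hE.2.2.2 1 (one_mem B) b hb x

lemma IsCondExp.map_mul_left (hE : IsCondExp (B : Set R) E) {b : R} (hb : b ∈ B) (x : R) :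
    E (b * x) = b * E x := by
  simpa only [mul_one] using hE.2.2.2 b hb 1 (one_mem B) x

lemma IsCondExp.map_eq_zero_of_mem_normalizer (hE : IsCondExp (B : Set R) E)
    (hB : IsIrreducible (B : Set R)) {w : R} (hw : w ∈ normalizer (B : Set R)) (hwB : w ∉ B) :
    E w = 0 := by
  obtain ⟨c, hc⟩ := hB.exists_eq_smul (x := E w) hw.1 fun b hb => by
    rw [← hE.map_mul_right hb, ← hE.map_mul_left (conj_mem_of_mem_normalizer hw hb),
      mul_assoc _ (star w), Unitary.star_mul_self_of_mem hw.1, mul_one]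
  rcases eq_or_ne c 0 with rfl | h0
  · rw [hc, zero_smul]
  · have hmem : c • w ∈ B := hc ▸ hE.1 w
    exact absurd ((inv_smul_smul₀ h0 w).subst (B.smul_mem hmem c⁻¹)) hwB

variable {ι : Type*} {u : ι → R}

/-- Orthonormality of a family with respect to the `E`-valued inner product `⟨x, y⟩ = E(x* y)`. -/
structure IsOrthonormal (E : R →ₗ[ℂ] R) (u : ι → R) : Prop where
  map_star_mul_self : ∀ i, E (star (u i) * u i) = 1
  pairwise : Pairwise fun i j => E (star (u i) * u j) = 0

lemma IsOrthonormal.map_star_mul_mul [DecidableEq ι] (hu : IsOrthonormal E u)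
    (hE : IsCondExp (B : Set R) E) (i j : ι) {b : R} (hb : b ∈ B) :
    E (star (u i) * (u j * b)) = if i = j then b else 0 := by
  rw [← mul_assoc, hE.map_mul_right hb]
  split_ifs with hij
  · rw [← hij, hu.map_star_mul_self, one_mul]
  · rw [hu.pairwise hij, zero_mul]

variable [Fintype ι]

lemma IsOrthonormal.map_star_mul_sum (hu : IsOrthonormal E u) (hE : IsCondExp (B : Set R) E)
    {b : ι → R} (hb : ∀ i, b i ∈ B) (i : ι) : E (star (u i) * ∑ j, u j * b j) = b i := by
  classical
  simp only [Finset.mul_sum, map_sum, hu.map_star_mul_mul hE i _ (hb _), Finset.sum_ite_eq,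
    Finset.mem_univ, if_true]

lemma IsOrthonormal.sum_mul_map_star_mul_eq (hu : IsOrthonormal E u)
    (hE : IsCondExp (B : Set R) E) (hcont : Continuous E) {s : Set R}
    (hs : Dense (Submodule.span ℂ s : Set R)) (hsu : ∀ x ∈ s, ∃ i, ∃ b ∈ B, x = u i * b) (x : R) :
    ∑ i, u i * E (star (u i) * x) = x := by
  classical
  let P : R →L[ℂ] R :=
    ∑ i, .mul ℂ R (u i) ∘L (⟨E, hcont⟩ : R →L[ℂ] R) ∘L .mul ℂ R (star (u i))
  have hP (y : R) : P y = ∑ i, u i * E (star (u i) * y) := by simp [P]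
  have hPid : P = .id ℂ R := ContinuousLinearMap.ext_on hs fun y hy => by
    obtain ⟨i, b, hb, rfl⟩ := hsu y hy
    simp [hP, hu.map_star_mul_mul hE _ i hb]
  rw [← hP, hPid, ContinuousLinearMap.id_apply]

lemma IsOrthonormal.exists_unique_coeff (hu : IsOrthonormal E u) (hE : IsCondExp (B : Set R) E)
    (hcont : Continuous E) {s : Set R} (hs : Dense (Submodule.span ℂ s : Set R))
    (hsu : ∀ x ∈ s, ∃ i, ∃ b ∈ B, x = u i * b) (x : R) :
    ∃ b : ι → R, (∀ i, b i ∈ B) ∧ x = ∑ i, u i * b i ∧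
      ∀ b' : ι → R, (∀ i, b' i ∈ B) → x = ∑ i, u i * b' i → b' = b := by
  refine ⟨fun i => E (star (u i) * x), fun i => hE.1 _,
    (hu.sum_mul_map_star_mul_eq hE hcont hs hsu x).symm, fun b' hb' hx => funext fun i => ?_⟩
  rw [hx, hu.map_star_mul_sum hE hb']

end CondExp

section RiemannLebesgue

open Filter Topology

variable {R : Type*} [NormedRing R] [StarRing R] [CStarRing R] [NormedAlgebra ℂ R] {ι : Type*}

lemma tendsto_map_unitary_mul_of_dense_span {F : Type*} [NormedAddCommGroup F] [NormedSpace ℂ F]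
    (T : R →L[ℂ] F) {u : ι → R} (hu : ∀ i, u i ∈ unitary R) {l : Filter ι} {s : Set R}
    (hs : Dense (Submodule.span ℂ s : Set R))
    (hlim : ∀ x ∈ s, Tendsto (fun i => T (u i * x)) l (𝓝 0)) (x : R) :
    Tendsto (fun i => T (u i * x)) l (𝓝 0) := by
  have hequi : UniformEquicontinuous fun i (y : R) => T (u i * y) :=
    LipschitzWith.uniformEquicontinuous _ ‖T‖₊ fun i => LipschitzWith.of_dist_le_mul fun y z => by
      calc dist (T (u i * y)) (T (u i * z)) ≤ ‖T‖ * dist (u i * y) (u i * z) :=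
            T.dist_le_opNorm _ _
        _ = ‖T‖ * dist y z := by
            rw [dist_eq_norm, ← mul_sub, CStarRing.norm_mem_unitary_mul _ (hu i), dist_eq_norm]
  have hspan : ∀ y ∈ Submodule.span ℂ s, Tendsto (fun i => T (u i * y)) l (𝓝 0) := by
    intro y hy
    induction hy using Submodule.span_induction with
    | mem y hy => exact hlim y hy
    | zero => simpa using tendsto_const_nhds
    | add y z _ _ hy hz => simpa [mul_add] using hy.add hz
    | smul c y _ hy => simpa using hy.const_smul c
  exact (hequi.equicontinuous x).tendsto_of_mem_closure tendsto_const_nhds hspan (hs x)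

lemma IsRightQB.finite_of_tendsto_cofinite [Nontrivial R] {E : R →ₗ[ℂ] R} {n : ℕ} {l : Fin n → R}
    (hl : IsRightQB E l) {u : ι → R} (hu : ∀ i, u i ∈ unitary R)
    (hlim : ∀ x, Tendsto (fun i => E (star (u i) * x)) cofinite (𝓝 0)) : Finite ι := by
  by_contra hfin
  have : Infinite ι := not_finite_iff_infinite.mp hfin
  have hstar : Tendsto (fun i => star (u i)) cofinite (𝓝 0) := by
    have := tendsto_finsetSum Finset.univ fun k _ => (hlim (l k)).mul_const (star (l k))
    simpa only [← hl _, zero_mul, Finset.sum_const_zero] using this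
  have hone : Tendsto (fun _ : ι => (1 : ℝ)) cofinite (𝓝 0) := by
    simpa only [CStarRing.norm_of_mem_unitary (Unitary.star_mem (hu _)), norm_zero] using hstar.norm
  exact one_ne_zero (tendsto_nhds_unique tendsto_const_nhds hone)

lemma IsRegular.dense_span_normalizer [StarModule ℂ R] {S : Set R} (hS : IsRegular S) :
    Dense (Submodule.span ℂ (normalizer S) : Set R) := by
  have hspan : ((StarAlgebra.adjoin ℂ (normalizer S) : StarSubalgebra ℂ R) : Set R) =
      Submodule.span ℂ (normalizer S) := by
    have hstar : star (normalizer S) ⊆ normalizer S := fun w hw =>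
      star_star w ▸ star_mem_normalizer hw
    calc ((StarAlgebra.adjoin ℂ (normalizer S) : StarSubalgebra ℂ R) : Set R)
        = Subalgebra.toSubmodule (StarAlgebra.adjoin ℂ (normalizer S)).toSubalgebra := rfl
      _ = Submodule.span ℂ (normalizer S) := by
        rw [StarAlgebra.adjoin_eq_span, Set.union_eq_left.mpr hstar, closure_normalizer]
  rw [dense_iff_closure_eq, ← hspan, ← StarSubalgebra.topologicalClosure_coe,
    show _ = _ from hS, StarSubalgebra.coe_top]

end RiemannLebesgue

lemma continuous_of_map_star_mul_self {E : A →ₗ[ℂ] A}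
    (hE : ∀ x, ∃ y, E (star x * x) = star y * y) : Continuous E := by
  let _ : CStarAlgebra A := {}
  let _ : PartialOrder A := CStarAlgebra.spectralOrder A
  have _ : StarOrderedRing A := CStarAlgebra.spectralOrderedRing A
  have hpos (x : A) (hx : 0 ≤ x) : 0 ≤ E x := by
    obtain ⟨y, rfl⟩ := CStarAlgebra.nonneg_iff_eq_star_mul_self.mp hx
    obtain ⟨z, hz⟩ := hE y
    exact hz ▸ star_mul_self_nonneg z
  exact map_continuous (PositiveLinearMap.mk₀ E hpos)

lemma IsCondExp.continuous {S : Set A} {E : A →ₗ[ℂ] A} (hE : IsCondExp S E) : Continuous E :=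
  continuous_of_map_star_mul_self hE.2.2.1

section WeylTransversal

variable {R : Type*} [NormedRing R] [StarRing R] [NormedAlgebra ℂ R] [StarModule ℂ R]
  {B : StarSubalgebra ℂ R} {E : R →ₗ[ℂ] R} {v w : normalizerSubgroup (B : Set R)}

lemma IsCondExp.map_star_mul_eq_zero (hE : IsCondExp (B : Set R) E)
    (hB : IsIrreducible (B : Set R)) (hvw : (v : Weyl B) ≠ w) : E (star (v : R) * (w : R)) = 0 :=
  hE.map_eq_zero_of_mem_normalizer hB (coe_mem_normalizer (v⁻¹ * w)) fun h =>
    hvw (Weyl.mk_eq_mk_iff_star_mul_mem.mpr ⟨h, (v⁻¹ * w).1.2⟩)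

lemma IsCondExp.isOrthonormal_of_injective (hE : IsCondExp (B : Set R) E)
    (hB : IsIrreducible (B : Set R)) {ι : Type*} {u : ι → normalizerSubgroup (B : Set R)}
    (hu : Function.Injective fun i => (u i : Weyl B)) : IsOrthonormal E fun i => (u i : R) where
  map_star_mul_self i := by
    rw [Unitary.star_mul_self_of_mem (u i).1.2, hE.2.1 1 (one_mem B)]
  pairwise _ _ hij := hE.map_star_mul_eq_zero hB (hu.ne hij)

end WeylTransversal

lemma IsRegular.finite_weyl {B : StarSubalgebra ℂ A} (hreg : IsRegular (B : Set A))
    (hirr : IsIrreducible (B : Set A)) {E : A →ₗ[ℂ] A} (hE : IsCondExp (B : Set A) E)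
    {n : ℕ} {l : Fin n → A} (hl : IsRightQB E l) : Finite (Weyl B) := by
  rcases subsingleton_or_nontrivial A with _ | _
  · exact Quotient.finite _
  let u (g : Weyl B) : normalizerSubgroup (B : Set A) := g.out
  have hu (g : Weyl B) : (u g : A) ∈ unitary A := (u g).1.2
  let T : A →L[ℂ] A := ⟨E, hE.continuous⟩
  refine hl.finite_of_tendsto_cofinite hu (tendsto_map_unitary_mul_of_dense_span T
    (fun g => Unitary.star_mem (hu g)) hreg.dense_span_normalizer fun v hv => ?_)
  obtain ⟨v, rfl⟩ := mem_normalizer_iff_exists_coe_eq.mp hv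
  refine tendsto_nhds_of_eventually_eq ?_
  filter_upwards [Filter.eventually_cofinite_ne (v : Weyl B)] with g hg
  exact hE.map_star_mul_eq_zero hirr (by rwa [QuotientGroup.out_eq'])

theorem irreducible_regular_inclusion_is_twisted_crossed_product_general
    (B : StarSubalgebra ℂ A) (hreg : IsRegular (B : Set A))
    (hirr : IsIrreducible (B : Set A))
    (E : A →ₗ[ℂ] A) (hE : IsCondExp (B : Set A) E)
    (nE : ℕ) (lE : Fin nE → A) (hlE : IsRightQB E lE) :
    ∃ (D : FiniteGroupData) (u : D.G → A),
      u 1 = 1 ∧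
      (∀ g, u g ∈ normalizer (B : Set A)) ∧
      (∀ g h : D.G, g ≠ h → u g * star (u h) ∉ UB (B : Set A)) ∧
      (∀ v ∈ normalizer (B : Set A), ∃ g, v * star (u g) ∈ UB (B : Set A)) ∧
      (∀ g h, u g * u h * star (u (g * h)) ∈ UB (B : Set A)) ∧
      (∀ g : D.G, g ≠ 1 →
        ¬ ∃ v, v ∈ (B : Set A) ∧ v ∈ unitary A ∧
          ∀ x ∈ (B : Set A), u g * x * star (u g) = v * x * star v) ∧
      (∀ x : A, ∃ b : D.G → A,
        (∀ g, b g ∈ (B : Set A)) ∧ x = ∑ g, u g * b g ∧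
        ∀ b' : D.G → A, (∀ g, b' g ∈ (B : Set A)) →
          x = ∑ g, u g * b' g → b' = b) := by
  have : Finite (Weyl B) := hreg.finite_weyl hirr hE hlE
  obtain ⟨D, ⟨e⟩⟩ := exists_finiteGroupData (Weyl B)
  obtain ⟨u, hu1, hu⟩ := exists_normalized_lift (e : D.G →* Weyl B)
  have hbij : Function.Bijective fun g => (u g : Weyl B) := funext hu ▸ e.bijective
  have hon : IsOrthonormal E fun g => (u g : A) := hE.isOrthonormal_of_injective hirr hbij.1
  refine ⟨D, fun g => u g, by simp only [hu1, OneMemClass.coe_one],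
    fun g => coe_mem_normalizer (u g),
    fun g h hgh hmem => hgh (hbij.1 (Weyl.mk_eq_mk_iff_mul_star_mem.mpr hmem)),
    fun v hv => exists_mul_star_mem_UB hbij.2 hv, fun g h => ?cocycle, ?outer,
    hon.exists_unique_coeff hE hE.continuous hreg.dense_span_normalizer
      fun v hv => exists_eq_mul_of_mem_normalizer hbij.2 hv⟩
  case cocycle =>
    have hmk : ((u g * u h : normalizerSubgroup (B : Set A)) : Weyl B) = u (g * h) := by
      rw [QuotientGroup.mk_mul, hu, hu, hu, map_mul]
    exact Weyl.mk_eq_mk_iff_mul_star_mem.mp hmk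
  case outer =>
    rintro g hg ⟨v, hvB, hvU, hv⟩
    have hmk : (u g : Weyl B) = 1 := hirr.mk_eq_one_of_conj_eq ⟨hvB, hvU⟩ hv
    exact hg (e.map_eq_one_iff.mp ((hu g).symm.trans hmk))

/-- for a regular irreducible inclusion `B ⊂ A` of simple unital
C*-algebras with a finite-index conditional expectation, there are a finite group `G`
(isomorphic to the Weyl group `N_A(B)/U(B)`, via `g ↦ [u_g]`) and a map
`u : G → N_A(B)` with `u_e = 1` such that `σ(g,h) = u_g u_h u_{gh}*` is a unitary of
`B`, `Ad(u_g)|_B` is outer for `g ≠ e`, and every `x ∈ A` is uniquely `Σ_g u_g b_g`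
with `b_g ∈ B`; i.e. `(α, σ)` is an outer cocycle action of the Weyl group on `B` and
`(B ⊂ A) ≅ (B ⊂ B ⋊^r_{(α,σ)} G)`. -/
theorem irreducible_regular_inclusion_is_twisted_crossed_product
    (B : StarSubalgebra ℂ A) (hBclosed : IsClosed (B : Set A))
    (hAsimple : IsSimpleCStar (Set.univ : Set A))
    (hBsimple : IsSimpleCStar (B : Set A))
    (hreg : IsRegular (B : Set A))
    (hirr : ∀ z ∈ cent (B : Set A), ∃ c : ℂ, z = c • (1 : A))
    (E : A →ₗ[ℂ] A) (hE : IsCondExp (B : Set A) E)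
    (nE : ℕ) (lE : Fin nE → A) (hlE : IsRightQB E lE) :
    ∃ (D : FiniteGroupData) (u : D.G → A),
      u 1 = 1 ∧
      (∀ g, u g ∈ normalizer (B : Set A)) ∧
      (∀ g h : D.G, g ≠ h → u g * star (u h) ∉ UB (B : Set A)) ∧
      (∀ v ∈ normalizer (B : Set A), ∃ g, v * star (u g) ∈ UB (B : Set A)) ∧
      (∀ g h, u g * u h * star (u (g * h)) ∈ UB (B : Set A)) ∧
      (∀ g : D.G, g ≠ 1 →
        ¬ ∃ v, v ∈ (B : Set A) ∧ v ∈ unitary A ∧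
          ∀ x ∈ (B : Set A), u g * x * star (u g) = v * x * star v) ∧
      (∀ x : A, ∃ b : D.G → A,
        (∀ g, b g ∈ (B : Set A)) ∧ x = ∑ g, u g * b g ∧
        ∀ b' : D.G → A, (∀ g, b' g ∈ (B : Set A)) →
          x = ∑ g, u g * b' g → b' = b) :=
  irreducible_regular_inclusion_is_twisted_crossed_product_general B hreg hirr E hE nE lE hlE

end RegularInclusion
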